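/- For every m ∈ ℕ₀ and all real x ≥ 1, y ≥ 1, the inequality (β^(m)(x y))² ≤ β^(m)(x) · β^(m)(y) holds. -/

import Mathlib

/-!
Write `β` as the moment generating function of `t ↦ -t` under the measure `μ` with density
`1 / (1 + e^{-t})` on `(0, ∞)`. This function is finite at every `x > 0`, so differentiation under
the integral sign gives `β^(m)(x) = (-1)^m ∫ t^m e^{-xt} dμ(t)`. Up to the sign `(-1)^m`, each
derivative is thus nonnegative and decreasing on `(0, ∞)`. Since `x, y ≥ 1` gives `x y ≥ x` and
`x y ≥ y`, the value `|β^(m)(x y)|` is bounded by both `|β^(m)(x)|` and `|β^(m)(y)|`; multiplying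
the two bounds, the signs cancel.
-/

open Real MeasureTheory Set

/-- Nielsen's beta function: `β(x) = ∫₀^∞ e^{-x t} / (1 + e^{-t}) dt`. -/
noncomputable def nielsenBeta (x : ℝ) : ℝ :=
  ∫ t in Set.Ioi (0:ℝ), Real.exp (-x * t) / (1 + Real.exp (-t))

/-- Nielsen's weight measure `dt / (1 + e^{-t})` on `(0, ∞)`, whose Laplace transform is `β`. -/
noncomputable def nielsenMeasure : Measure ℝ :=
  (volume.restrict (Ioi (0 : ℝ))).withDensity
    fun t => ENNReal.ofReal (1 / (1 + Real.exp (-t)))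

lemma nielsenMeasure_le : nielsenMeasure ≤ volume.restrict (Ioi (0 : ℝ)) := by
  have h : (fun t : ℝ => ENNReal.ofReal (1 / (1 + Real.exp (-t)))) ≤ 1 := by
    intro t
    have ht := Real.exp_pos (-t)
    simp only [Pi.one_apply, ENNReal.ofReal_le_one]
    rw [div_le_one (by positivity)]
    linarith
  calc nielsenMeasure ≤ (volume.restrict (Ioi (0 : ℝ))).withDensity 1 :=
        withDensity_mono (Filter.Eventually.of_forall h)
    _ = _ := withDensity_one

lemma ae_pos_nielsenMeasure : ∀ᵐ t ∂nielsenMeasure, 0 < t :=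
  (withDensity_absolutelyContinuous _ _).ae_le (ae_restrict_mem measurableSet_Ioi)

lemma nielsenBeta_eq_mgf : nielsenBeta = ProbabilityTheory.mgf (fun t => -t) nielsenMeasure := by
  funext x
  unfold nielsenBeta ProbabilityTheory.mgf nielsenMeasure
  rw [integral_withDensity_eq_integral_toReal_smul (by fun_prop)
    (Filter.Eventually.of_forall fun _ => ENNReal.ofReal_lt_top)]
  refine integral_congr_ae (Filter.Eventually.of_forall fun t => ?_)
  have ht := Real.exp_pos (-t)
  simp only [smul_eq_mul]
  rw [ENNReal.toReal_ofReal (by positivity), show x * -t = -x * t by ring]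
  ring

lemma mem_interior_integrableExpSet {x : ℝ} (hx : 0 < x) :
    x ∈ interior (ProbabilityTheory.integrableExpSet (fun t => -t) nielsenMeasure) := by
  refine interior_maximal (t := Ioi 0) (fun z hz => ?_) isOpen_Ioi hx
  have h : IntegrableOn (fun t : ℝ => Real.exp (-z * t)) (Ioi 0) :=
    integrableOn_exp_mul_Ioi (by simpa using hz) 0
  refine (Integrable.mono_measure h nielsenMeasure_le).congr
    (Filter.Eventually.of_forall fun t => ?_)
  simp

lemma integrable_pow_mul_exp_nielsenMeasure (m : ℕ) {x : ℝ} (hx : 0 < x) :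
    Integrable (fun t => t ^ m * Real.exp (x * -t)) nielsenMeasure := by
  have h := (ProbabilityTheory.integrable_pow_mul_exp_of_mem_interior_integrableExpSet
    (mem_interior_integrableExpSet hx) m).const_mul ((-1) ^ m)
  refine h.congr (Filter.Eventually.of_forall fun t => ?_)
  simp only
  rw [← mul_assoc, ← mul_pow]
  simp

lemma iteratedDeriv_nielsenBeta (m : ℕ) {x : ℝ} (hx : 0 < x) :
    iteratedDeriv m nielsenBeta x =
      (-1) ^ m * ∫ t, t ^ m * Real.exp (x * -t) ∂nielsenMeasure := by
  rw [nielsenBeta_eq_mgf, ProbabilityTheory.iteratedDeriv_mgf (mem_interior_integrableExpSet hx),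
    ← integral_const_mul]
  refine integral_congr_ae (Filter.Eventually.of_forall fun t => ?_)
  simp only
  rw [← mul_assoc, ← mul_pow]
  simp

lemma integral_pow_mul_exp_anti (m : ℕ) {x y : ℝ} (hx : 0 < x) (hxy : x ≤ y) :
    ∫ t, t ^ m * Real.exp (y * -t) ∂nielsenMeasure ≤
      ∫ t, t ^ m * Real.exp (x * -t) ∂nielsenMeasure := by
  refine integral_mono_ae (integrable_pow_mul_exp_nielsenMeasure m (hx.trans_le hxy))
    (integrable_pow_mul_exp_nielsenMeasure m hx) ?_
  filter_upwards [ae_pos_nielsenMeasure] with t ht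
  have : y * -t ≤ x * -t := by nlinarith
  gcongr

lemma integral_pow_mul_exp_nonneg (m : ℕ) (x : ℝ) :
    0 ≤ ∫ t, t ^ m * Real.exp (x * -t) ∂nielsenMeasure := by
  refine integral_nonneg_of_ae ?_
  filter_upwards [ae_pos_nielsenMeasure] with t ht
  simp only [Pi.zero_apply]
  positivity

theorem iteratedDeriv_nielsenBeta_sq_mul (m : ℕ) (x y : ℝ) (hx : 1 ≤ x) (hy : 1 ≤ y) :
    iteratedDeriv m nielsenBeta (x * y) ^ 2 ≤
      iteratedDeriv m nielsenBeta x * iteratedDeriv m nielsenBeta y := by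
  have hx0 : 0 < x := by linarith
  have hy0 : 0 < y := by linarith
  rw [iteratedDeriv_nielsenBeta m hx0, iteratedDeriv_nielsenBeta m hy0,
    iteratedDeriv_nielsenBeta m (mul_pos hx0 hy0), mul_pow, mul_mul_mul_comm, ← sq ((-1 : ℝ) ^ m),
    ← pow_mul, mul_comm m 2, pow_mul, neg_one_sq, one_pow, one_mul, one_mul, sq]
  exact mul_le_mul (integral_pow_mul_exp_anti m hx0 (by nlinarith))
    (integral_pow_mul_exp_anti m hy0 (by nlinarith))
    (integral_pow_mul_exp_nonneg m _) (integral_pow_mul_exp_nonneg m _)
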